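/- Let d be a positive integer, M ∈ ℂ^{d×d} a positive semi-definite Hermitian matrix of rank r ≤ d with eigenvalues λ₁ ≥ … ≥ λ_d, c ∈ ℝ with c ≠ λ_r, and a ∈ ℂ^d. Let A be the (d+1)×(d+1) Hermitian bordered matrix A = [[c, a*], [a, M]]. Then λ_{r+1}(A) ≥ min(c, λ_r) − ‖a‖₂² / |c − λ_r|. -/

import Mathlib

open scoped ComplexOrder

/-!
Let `λ` be the `(k + 1)`-st largest eigenvalue of `M`, and let `V` be the span of the eigenvectors
of `M` for its `k + 1` largest eigenvalues. At a vector `(t, w)` with `w ∈ V`, Cauchy–Schwarz bounds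
the quadratic form of the bordered matrix below by the real binary form
`c |t|² - 2 ‖a‖ |t| ‖w‖ + λ ‖w‖²`, whose least eigenvalue is at least
`min c λ - ‖a‖² / |c - λ|`. Such vectors form a space of dimension `k + 2`, so Courant–Fischer
transfers the bound to the `(k + 2)`-nd largest eigenvalue of the bordered matrix.
-/

open scoped InnerProductSpace
open Module Submodule

section CourantFischer

lemma finrank_span_image_of_linearIndependent {R V ι : Type*} [Semiring R]
    [StrongRankCondition R] [Nontrivial R] [AddCommMonoid V] [Module R V] {v : ι → V}
    (hv : LinearIndependent R v) (S : Set ι) [Fintype S] :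
    finrank R (span R (v '' S)) = Fintype.card S := by
  rw [Set.image_eq_range]
  exact finrank_span_eq_card (hv.comp _ Subtype.val_injective)

variable {𝕜 E : Type*} [RCLike 𝕜] [NormedAddCommGroup E] [InnerProductSpace 𝕜 E] {T : E →L[𝕜] E}

section Eigenbasis

variable {ι : Type*} [Fintype ι] {b : OrthonormalBasis ι 𝕜 E} {μ : ι → ℝ}

lemma reApplyInnerSelf_eq_sum_eigenvalues (hb : ∀ i, T (b i) = (μ i : 𝕜) • b i) (x : E) :
    T.reApplyInnerSelf x = ∑ i, μ i * ‖⟪b i, x⟫_𝕜‖ ^ 2 := by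
  have hT : T x = ∑ i, ⟪b i, x⟫_𝕜 • (μ i : 𝕜) • b i := by
    conv_lhs => rw [← b.sum_repr' x]
    simp only [map_sum, map_smul, hb]
  rw [T.reApplyInnerSelf_apply, hT, sum_inner, map_sum]
  refine Finset.sum_congr rfl fun i _ => ?_
  rw [inner_smul_left, inner_smul_left, RCLike.conj_ofReal, mul_left_comm, RCLike.conj_mul]
  norm_cast

lemma mul_norm_sq_le_reApplyInnerSelf_of_mem_span (hb : ∀ i, T (b i) = (μ i : 𝕜) • b i)
    {S : Set ι} {s : ℝ} (hs : ∀ i ∈ S, s ≤ μ i) {x : E} (hx : x ∈ span 𝕜 (b '' S)) :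
    s * ‖x‖ ^ 2 ≤ T.reApplyInnerSelf x := by
  rw [reApplyInnerSelf_eq_sum_eigenvalues hb, ← b.sum_sq_norm_inner_right, Finset.mul_sum]
  refine Finset.sum_le_sum fun i _ => ?_
  by_cases hi : i ∈ S
  · gcongr
    exact hs i hi
  · have hinner : ⟪b i, x⟫_𝕜 = 0 := by
      rw [← b.coe_toBasis, b.toBasis.mem_span_image] at hx
      rw [← b.repr_apply_apply, ← b.coe_toBasis_repr_apply]
      exact Finsupp.notMem_support_iff.mp fun h => hi (hx h)
    simp [hinner]

lemma reApplyInnerSelf_le_mul_norm_sq_of_mem_span (hb : ∀ i, T (b i) = (μ i : 𝕜) • b i)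
    {S : Set ι} {s : ℝ} (hs : ∀ i ∈ S, μ i ≤ s) {x : E} (hx : x ∈ span 𝕜 (b '' S)) :
    T.reApplyInnerSelf x ≤ s * ‖x‖ ^ 2 := by
  have hneg : ∀ i, (-T) (b i) = ((-μ i : ℝ) : 𝕜) • b i := by simp [hb]
  have h := mul_norm_sq_le_reApplyInnerSelf_of_mem_span hneg
    (fun i hi => neg_le_neg (hs i hi)) hx
  simp only [ContinuousLinearMap.reApplyInnerSelf_apply, neg_mul, neg_apply, inner_neg_left,
    map_neg, neg_le_neg_iff] at h ⊢
  exact h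

end Eigenbasis

lemma le_eigenvalue_of_lt_finrank {m : ℕ} {b : OrthonormalBasis (Fin m) 𝕜 E} {μ : Fin m → ℝ}
    (hb : ∀ i, T (b i) = (μ i : 𝕜) • b i) (hμ : Antitone μ) {k : Fin m} {V : Submodule 𝕜 E}
    (hV : k < finrank 𝕜 V) {s : ℝ} (hs : ∀ x ∈ V, s * ‖x‖ ^ 2 ≤ T.reApplyInnerSelf x) :
    s ≤ μ k := by
  set W := span 𝕜 (b '' Set.Ici k)
  have hW : finrank 𝕜 W = m - k := by
    simp [W, finrank_span_image_of_linearIndependent b.orthonormal.linearIndependent]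
  have hE : finrank 𝕜 E = m := by simp [finrank_eq_card_basis b.toBasis]
  have : FiniteDimensional 𝕜 E := b.toBasis.finiteDimensional_of_finite
  have hVW : ¬Disjoint V W := fun h => by
    have := finrank_add_finrank_le_of_disjoint h
    omega
  obtain ⟨x, hx, hx0⟩ := (Submodule.ne_bot_iff _).mp (disjoint_iff.not.mp hVW)
  have hle : s * ‖x‖ ^ 2 ≤ μ k * ‖x‖ ^ 2 := (hs x hx.1).trans
    (reApplyInnerSelf_le_mul_norm_sq_of_mem_span hb (fun _ hi => hμ hi) hx.2)
  exact le_of_mul_le_mul_right hle (by positivity)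

end CourantFischer

section BinaryForm

variable {F : Type*} [Field F] [LinearOrder F] [IsStrictOrderedRing F] {c l : F}

lemma sub_sq_div_mul_le_binaryForm_of_lt (h : c < l) (α p q : F) :
    (c - α ^ 2 / (l - c)) * (p ^ 2 + q ^ 2) ≤ c * p ^ 2 - 2 * α * p * q + l * q ^ 2 := by
  have : 0 < l - c := sub_pos.mpr h
  have hdiff : c * p ^ 2 - 2 * α * p * q + l * q ^ 2 - (c - α ^ 2 / (l - c)) * (p ^ 2 + q ^ 2)
      = (α * p - (l - c) * q) ^ 2 / (l - c) + α ^ 2 * q ^ 2 / (l - c) := by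
    field_simp
    ring
  rw [← sub_nonneg, hdiff]
  positivity

lemma min_sub_sq_div_mul_le_binaryForm (h : c ≠ l) (α p q : F) :
    (min c l - α ^ 2 / |c - l|) * (p ^ 2 + q ^ 2) ≤ c * p ^ 2 - 2 * α * p * q + l * q ^ 2 := by
  rcases lt_or_gt_of_ne h with h | h
  · rw [min_eq_left h.le, abs_sub_comm, abs_of_pos (sub_pos.mpr h)]
    exact sub_sq_div_mul_le_binaryForm_of_lt h α p q
  · rw [min_eq_right h.le, abs_of_pos (sub_pos.mpr h)]
    linarith [sub_sq_div_mul_le_binaryForm_of_lt h α q p]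

end BinaryForm

section Bordered

variable {𝕜 n : Type*} [RCLike 𝕜]

/-- The bordered matrix `[[c, a*], [a, M]]`, with the border indexed by `Unit`. -/
def borderedMatrix (c : ℝ) (a : EuclideanSpace 𝕜 n) (M : Matrix n n 𝕜) :
    Matrix (Unit ⊕ n) (Unit ⊕ n) 𝕜 :=
  Matrix.fromBlocks (Matrix.of fun _ _ => (c : 𝕜)) (Matrix.of fun _ j => star (a j))
    (Matrix.of fun i _ => a i) M

/-- The vector `(t, w)` on which a bordered matrix acts, as a linear function of `t` and `w`. -/
def borderedVec : 𝕜 × EuclideanSpace 𝕜 n →ₗ[𝕜] EuclideanSpace 𝕜 (Unit ⊕ n) where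
  toFun x := WithLp.toLp 2 (Sum.elim (fun _ => x.1) x.2)
  map_add' _ _ := by ext (i | i) <;> rfl
  map_smul' _ _ := by ext (i | i) <;> rfl

lemma borderedVec_injective : Function.Injective (borderedVec (𝕜 := 𝕜) (n := n)) := fun _ _ h =>
  Prod.ext congr($h (Sum.inl ())) (PiLp.ext fun i => congr($h (Sum.inr i)))

/-- The subspace of vectors `(t, w)` with `w ∈ V` and `t` arbitrary. -/
def borderedSubspace (V : Submodule 𝕜 (EuclideanSpace 𝕜 n)) :
    Submodule 𝕜 (EuclideanSpace 𝕜 (Unit ⊕ n)) :=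
  LinearMap.range (borderedVec ∘ₗ LinearMap.id.prodMap V.subtype)

lemma finrank_borderedSubspace (V : Submodule 𝕜 (EuclideanSpace 𝕜 n)) [FiniteDimensional 𝕜 V] :
    finrank 𝕜 (borderedSubspace V) = finrank 𝕜 V + 1 := by
  have hinj : Function.Injective (borderedVec ∘ₗ LinearMap.id.prodMap V.subtype) :=
    borderedVec_injective.comp (Function.injective_id.prodMap V.injective_subtype)
  rw [borderedSubspace, LinearMap.finrank_range_of_inj hinj, finrank_prod, finrank_self, add_comm]

variable [Fintype n]

lemma inner_borderedVec (x y : 𝕜 × EuclideanSpace 𝕜 n) :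
    ⟪borderedVec x, borderedVec y⟫_𝕜 = ⟪x.1, y.1⟫_𝕜 + ⟪x.2, y.2⟫_𝕜 := by
  simp [borderedVec, PiLp.inner_apply]

lemma norm_sq_borderedVec (x : 𝕜 × EuclideanSpace 𝕜 n) :
    ‖borderedVec x‖ ^ 2 = ‖x.1‖ ^ 2 + ‖x.2‖ ^ 2 := by
  simp only [← inner_self_eq_norm_sq (𝕜 := 𝕜), inner_borderedVec, map_add]

variable [DecidableEq n] (c : ℝ) (a : EuclideanSpace 𝕜 n) (M : Matrix n n 𝕜)

lemma toEuclideanCLM_borderedMatrix_borderedVec (t : 𝕜) (w : EuclideanSpace 𝕜 n) :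
    Matrix.toEuclideanCLM (𝕜 := 𝕜) (borderedMatrix c a M) (borderedVec (t, w)) =
      borderedVec (c * t + ⟪a, w⟫_𝕜, t • a + Matrix.toEuclideanCLM (𝕜 := 𝕜) M w) := by
  ext (i | i) <;>
    simp [borderedMatrix, borderedVec, Matrix.mulVec, dotProduct, PiLp.inner_apply, mul_comm]

lemma reApplyInnerSelf_borderedMatrix (t : 𝕜) (w : EuclideanSpace 𝕜 n) :
    (Matrix.toEuclideanCLM (𝕜 := 𝕜) (borderedMatrix c a M)).reApplyInnerSelf (borderedVec (t, w)) =
      c * ‖t‖ ^ 2 + 2 * RCLike.re ⟪t • a, w⟫_𝕜 +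
        (Matrix.toEuclideanCLM (𝕜 := 𝕜) M).reApplyInnerSelf w := by
  have hcorner : RCLike.re ⟪c * t, t⟫_𝕜 = c * ‖t‖ ^ 2 := by
    rw [← smul_eq_mul, inner_smul_left, RCLike.conj_ofReal, RCLike.re_ofReal_mul,
      inner_self_eq_norm_sq]
  have hborder : RCLike.re ⟪⟪a, w⟫_𝕜, t⟫_𝕜 = RCLike.re ⟪t • a, w⟫_𝕜 := by
    rw [← inner_conj_symm, RCLike.conj_re, RCLike.inner_apply, inner_smul_left, mul_comm]
  simp only [ContinuousLinearMap.reApplyInnerSelf_apply, toEuclideanCLM_borderedMatrix_borderedVec,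
    inner_borderedVec, inner_add_left, map_add, hcorner, hborder]
  ring

variable {c M}

lemma min_sub_div_mul_norm_sq_le_reApplyInnerSelf_borderedMatrix {l : ℝ} (hcl : c ≠ l) (t : 𝕜)
    {w : EuclideanSpace 𝕜 n}
    (hw : l * ‖w‖ ^ 2 ≤ (Matrix.toEuclideanCLM (𝕜 := 𝕜) M).reApplyInnerSelf w) :
    (min c l - ‖a‖ ^ 2 / |c - l|) * ‖borderedVec (t, w)‖ ^ 2 ≤
      (Matrix.toEuclideanCLM (𝕜 := 𝕜) (borderedMatrix c a M)).reApplyInnerSelf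
        (borderedVec (t, w)) := by
  have hborder : -(‖t‖ * ‖a‖ * ‖w‖) ≤ RCLike.re ⟪t • a, w⟫_𝕜 := by
    rw [← norm_smul]
    exact neg_le_of_abs_le ((RCLike.abs_re_le_norm _).trans (norm_inner_le_norm _ _))
  calc (min c l - ‖a‖ ^ 2 / |c - l|) * ‖borderedVec (t, w)‖ ^ 2
      ≤ c * ‖t‖ ^ 2 - 2 * ‖a‖ * ‖t‖ * ‖w‖ + l * ‖w‖ ^ 2 := by
        rw [norm_sq_borderedVec]
        exact min_sub_sq_div_mul_le_binaryForm hcl _ _ _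
    _ ≤ c * ‖t‖ ^ 2 + 2 * RCLike.re ⟪t • a, w⟫_𝕜 +
          (Matrix.toEuclideanCLM (𝕜 := 𝕜) M).reApplyInnerSelf w := by linarith
    _ = _ := (reApplyInnerSelf_borderedMatrix c a M t w).symm

end Bordered

section Eigenvalues

variable {𝕜 n : Type*} [RCLike 𝕜] [Fintype n] [DecidableEq n]

lemma toEuclideanCLM_eigenvectorBasis_reindex {ι : Type*} [Fintype ι] {B : Matrix n n 𝕜}
    (hB : B.IsHermitian) {e : ι ≃ n} {μ : ι → ℝ} (hμ : ∀ i, μ i = hB.eigenvalues (e i)) (i : ι) :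
    Matrix.toEuclideanCLM (𝕜 := 𝕜) B (hB.eigenvectorBasis.reindex e.symm i) =
      (μ i : 𝕜) • hB.eigenvectorBasis.reindex e.symm i := by
  ext j
  simpa [hμ, RCLike.real_smul_eq_coe_mul] using congrFun (hB.mulVec_eigenvectorBasis (e i)) j

theorem bordered_smallest_nonzero_eigenvalue_lower_mathias_general {d : ℕ} {M : Matrix n n 𝕜}
    (hM : M.IsHermitian) {c : ℝ} (a : EuclideanSpace 𝕜 n) {μ : Fin d → ℝ} (hμa : Antitone μ)
    (hμ : ∃ e : Fin d ≃ n, ∀ i, μ i = hM.eigenvalues (e i)) (k : Fin d) (hc : c ≠ μ k)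
    (hA : (borderedMatrix c a M).IsHermitian) {ν : Fin (d + 1) → ℝ} (hνa : Antitone ν)
    (hν : ∃ e : Fin (d + 1) ≃ Unit ⊕ n, ∀ i, ν i = hA.eigenvalues (e i)) :
    min c (μ k) - ‖a‖ ^ 2 / |c - μ k| ≤ ν k.succ := by
  obtain ⟨eM, heM⟩ := hμ
  obtain ⟨eA, heA⟩ := hν
  let b := hM.eigenvectorBasis.reindex eM.symm
  have hb := toEuclideanCLM_eigenvectorBasis_reindex hM heM
  let V := span 𝕜 (b '' Set.Iic k)
  have hV : finrank 𝕜 V = k + 1 := by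
    simp [V, finrank_span_image_of_linearIndependent b.orthonormal.linearIndependent]
  refine le_eigenvalue_of_lt_finrank (toEuclideanCLM_eigenvectorBasis_reindex hA heA) hνa
    (V := borderedSubspace V) (by simp [finrank_borderedSubspace, hV]) ?_
  rintro _ ⟨⟨t, w⟩, rfl⟩
  exact min_sub_div_mul_norm_sq_le_reApplyInnerSelf_borderedMatrix a hc t
    (mul_norm_sq_le_reApplyInnerSelf_of_mem_span hb (fun _ hi => hμa hi) w.2)

end Eigenvalues

/-- **Mathias-type lower bound on the smallest nonzero eigenvalue after bordering.**
`M ∈ ℂ^{d×d}` is PSD Hermitian of rank `r ≤ d`, with antitone eigenvalue enumeration `μ`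
(so `μ (r-1) = λ_r`), `c ≠ λ_r`, and `ν` antitone enumeration of eigenvalues of
`A = [[c, a*], [a, M]]` (so `ν r = λ_{r+1}(A)`). Then
`λ_{r+1}(A) ≥ min (c, λ_r) − ‖a‖₂² / |c − λ_r|`. -/
theorem bordered_smallest_nonzero_eigenvalue_lower_mathias
    (d : ℕ) (hd : 0 < d)
    (M : Matrix (Fin d) (Fin d) ℂ) (hM : M.IsHermitian) (hpsd : M.PosSemidef)
    (r : ℕ) (hr1 : 1 ≤ r) (hrd : r ≤ d) (hrank : M.rank = r)
    (c : ℝ) (a : EuclideanSpace ℂ (Fin d))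
    (μ : Fin d → ℝ) (hμa : Antitone μ)
    (hμ : ∃ e : Equiv.Perm (Fin d), ∀ i, μ i = hM.eigenvalues (e i))
    (hc : c ≠ μ ⟨r - 1, by omega⟩)
    (A : Matrix (Unit ⊕ Fin d) (Unit ⊕ Fin d) ℂ)
    (hA : A = Matrix.fromBlocks (Matrix.of fun _ _ => (c : ℂ))
        (Matrix.of fun _ j => star (a j)) (Matrix.of fun i _ => a i) M)
    (hAh : A.IsHermitian)
    (ν : Fin (d + 1) → ℝ) (hνa : Antitone ν)
    (hν : ∃ e : Fin (d + 1) ≃ (Unit ⊕ Fin d), ∀ i, ν i = hAh.eigenvalues (e i)) :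
    ν ⟨r, by omega⟩
      ≥ min c (μ ⟨r - 1, by omega⟩) - ‖a‖ ^ 2 / |c - μ ⟨r - 1, by omega⟩| := by
  obtain ⟨k, rfl⟩ := Nat.exists_eq_add_of_le' hr1
  subst hA
  exact bordered_smallest_nonzero_eigenvalue_lower_mathias_general
    hM a hμa hμ ⟨k, hrd⟩ hc hAh hνa hν
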